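/- arXiv:2307.13769 — 2 statements merged into one kernel-verified Lean document; each statement's English description precedes it below -/
import Mathlib

section
/- Let a, b ∈ ℝ and c > 0 with c ≥ max{a, b}. If a(a+1)b(b+1) ≥ 0 then the function z ↦ F(a,b;c;z) is convex on [0,1), and if a(a+1)b(b+1) ≤ 0 then it is concave on [0,1). -/
open Real Set MeasureTheory

/-- Pochhammer symbol (rising factorial) for a real argument. -/
noncomputable def poch (x : ℝ) (n : ℕ) : ℝ := ∏ i ∈ Finset.range n, (x + i)

/-- Gauss hypergeometric series. -/
noncomputable def hyperF (a b c z : ℝ) : ℝ :=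
  ∑' n : ℕ, poch a n * poch b n / (poch c n * (n.factorial : ℝ)) * z ^ n

/-!
The second derivative of `F(a, b; c; ·)` is `a(a+1)b(b+1)/(c(c+1)) F(a+2, b+2; c+2; ·)`, so it
suffices to see that `F(a, b; c; ·) ≥ 0` on `[0, 1)` when `c > 0` and `(c - a)(c - b) ≥ 0`.
Put `P(x) = (1 - x)^(a+b-c) F(a, b; c; x)` and `Q(x) = x^c F(a, b; c+1; x)`. By the contiguous
relations the derivative of `P` is a nonnegative multiple of `Q` and that of `Q` is a nonnegative
multiple of `P`, while `P(0) = 1` and `Q(0) = 0`. Hence `PQ` increases from `0`, so `P²` increases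
from `1`, and `P` never drops below `1`.
-/

section PowerSeries

variable {𝕜 E : Type*} [NontriviallyNormedField 𝕜] [NormedAddCommGroup E] [NormedSpace 𝕜 E]
  [CompleteSpace E] (p : FormalMultilinearSeries 𝕜 𝕜 E) {x : 𝕜}

theorem hasSum_deriv_formalMultilinearSeries_sum (hx : ‖x‖ₑ < p.radius) :
    HasSum (fun n ↦ x ^ n • (n + 1) • p.coeff (n + 1)) (deriv p.sum x) := by
  have hmem : x ∈ Metric.eball 0 p.derivSeries.radius := by
    simpa using hx.trans_le p.radius_le_radius_derivSeries
  have h := (p.derivSeries.hasSum hmem).mapL (ContinuousLinearMap.apply 𝕜 E (1 : 𝕜))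
  rw [← fderiv_apply_one_eq_deriv, p.fderiv_sum hx]
  simpa using h

theorem hasSum_smul_deriv_formalMultilinearSeries_sum (hx : ‖x‖ₑ < p.radius) :
    HasSum (fun n ↦ x ^ n • n • p.coeff n) (x • deriv p.sum x) := by
  rw [← hasSum_nat_add_iff' 1]
  simpa [pow_succ', mul_smul] using
    (hasSum_deriv_formalMultilinearSeries_sum p hx).const_smul x

end PowerSeries

section Coefficients

theorem ascPochhammer_succ_eval_left {S : Type*} [CommSemiring S] (n : ℕ) (s : S) :
    (ascPochhammer S (n + 1)).eval s = s * (ascPochhammer S n).eval (s + 1) := by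
  simp [ascPochhammer_succ_left]

variable {K : Type*} [Field K] (a b : K) {c : K} (n : ℕ)

theorem succ_mul_ordinaryHypergeometricCoefficient_succ [CharZero K] (c : K) :
    (n + 1) * ordinaryHypergeometricCoefficient a b c (n + 1) =
      a * b / c * ordinaryHypergeometricCoefficient (a + 1) (b + 1) (c + 1) n := by
  have hn : (n + 1 : K) ≠ 0 := n.cast_add_one_ne_zero
  simp only [ordinaryHypergeometricCoefficient, ascPochhammer_succ_eval_left, Nat.factorial_succ,
    Nat.cast_mul, Nat.cast_add_one, mul_inv]
  field_simp

theorem add_mul_succ_mul_ordinaryHypergeometricCoefficient_succ [CharZero K] (hc : c + n ≠ 0) :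
    (c + n) * ((n + 1) * ordinaryHypergeometricCoefficient a b c (n + 1)) =
      (a + n) * (b + n) * ordinaryHypergeometricCoefficient a b c n := by
  have hn : (n + 1 : K) ≠ 0 := n.cast_add_one_ne_zero
  simp only [ordinaryHypergeometricCoefficient, ascPochhammer_succ_eval, Nat.factorial_succ,
    Nat.cast_mul, Nat.cast_add_one, mul_inv]
  field_simp

theorem add_mul_ordinaryHypergeometricCoefficient_add_one (hc₀ : c ≠ 0) (hc : c + n ≠ 0) :
    (c + n) * ordinaryHypergeometricCoefficient a b (c + 1) n =
      c * ordinaryHypergeometricCoefficient a b c n := by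
  have h : (ascPochhammer K n).eval (c + 1) = (ascPochhammer K n).eval c * (c + n) / c := by
    rw [eq_div_iff hc₀, ← ascPochhammer_succ_eval, ascPochhammer_succ_eval_left, mul_comm]
  simp only [ordinaryHypergeometricCoefficient, h, mul_inv, div_eq_mul_inv]
  field_simp

end Coefficients

section RCLike

variable {𝕂 : Type*} [RCLike 𝕂] (a b : 𝕂) {c x : 𝕂}

theorem one_le_ordinaryHypergeometricSeries_radius (𝔸 : Type*) [NormedDivisionRing 𝔸]
    [NormedAlgebra 𝕂 𝔸] (c : 𝕂) : 1 ≤ (ordinaryHypergeometricSeries 𝔸 a b c).radius := by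
  by_cases h : ∀ k : ℕ, (k : 𝕂) ≠ -a ∧ (k : 𝕂) ≠ -b ∧ (k : 𝕂) ≠ -c
  · exact (ordinaryHypergeometricSeries_radius_eq_one 𝔸 a b c h).ge
  · obtain ⟨k, hk⟩ : ∃ k : ℕ, a = -k ∨ b = -k ∨ c = -k := by
      simpa only [not_forall, not_and_or, not_not, eq_neg_iff_add_eq_zero, add_comm] using h
    rcases hk with rfl | rfl | rfl
    · simp [ordinaryHypergeometric_radius_top_of_neg_nat₁]
    · simp [ordinaryHypergeometric_radius_top_of_neg_nat₂]
    · simp [ordinaryHypergeometric_radius_top_of_neg_nat₃]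

theorem enorm_lt_ordinaryHypergeometricSeries_radius (c : 𝕂) (hx : ‖x‖ < 1) :
    ‖x‖ₑ < (ordinaryHypergeometricSeries 𝕂 a b c).radius := by
  refine lt_of_lt_of_le ?_ (one_le_ordinaryHypergeometricSeries_radius a b 𝕂 c)
  rwa [← ofReal_norm, ENNReal.ofReal_lt_one]

theorem ordinaryHypergeometricSeries_coeff (c : 𝕂) (n : ℕ) :
    (ordinaryHypergeometricSeries 𝕂 a b c).coeff n = ordinaryHypergeometricCoefficient a b c n :=
  FormalMultilinearSeries.coeff_ofScalars

theorem hasSum_ordinaryHypergeometric (c : 𝕂) (hx : ‖x‖ < 1) :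
    HasSum (fun n ↦ ordinaryHypergeometricCoefficient a b c n * x ^ n) (₂F₁ a b c x) := by
  refine ((ordinaryHypergeometricSeries 𝕂 a b c).hasSum (x := x) ?_).congr_fun fun n ↦ ?_
  · simpa using enorm_lt_ordinaryHypergeometricSeries_radius a b c hx
  · exact (ordinaryHypergeometricSeries_apply_eq a b c x n).symm

theorem hasSum_deriv_ordinaryHypergeometric (c : 𝕂) (hx : ‖x‖ < 1) :
    HasSum (fun n : ℕ ↦ (n + 1) * ordinaryHypergeometricCoefficient a b c (n + 1) * x ^ n)
      (deriv (₂F₁ a b c) x) := by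
  refine (hasSum_deriv_formalMultilinearSeries_sum _
    (enorm_lt_ordinaryHypergeometricSeries_radius a b c hx)).congr_fun fun n ↦ ?_
  rw [ordinaryHypergeometricSeries_coeff, smul_eq_mul, nsmul_eq_mul, Nat.cast_add_one]
  ring

theorem hasSum_mul_deriv_ordinaryHypergeometric (c : 𝕂) (hx : ‖x‖ < 1) :
    HasSum (fun n : ℕ ↦ n * ordinaryHypergeometricCoefficient a b c n * x ^ n)
      (x * deriv (₂F₁ a b c) x) := by
  refine (hasSum_smul_deriv_formalMultilinearSeries_sum _
    (enorm_lt_ordinaryHypergeometricSeries_radius a b c hx)).congr_fun fun n ↦ ?_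
  rw [ordinaryHypergeometricSeries_coeff, smul_eq_mul, nsmul_eq_mul]
  ring

theorem differentiableAt_ordinaryHypergeometric (c : 𝕂) (hx : ‖x‖ < 1) :
    DifferentiableAt 𝕂 (₂F₁ a b c) x :=
  (FormalMultilinearSeries.hasFDerivAt_sum
    (enorm_lt_ordinaryHypergeometricSeries_radius a b c hx)).differentiableAt

theorem hasDerivAt_ordinaryHypergeometric (c : 𝕂) (hx : ‖x‖ < 1) :
    HasDerivAt (₂F₁ a b c) (a * b / c * ₂F₁ (a + 1) (b + 1) (c + 1) x) x := by
  refine (differentiableAt_ordinaryHypergeometric a b c hx).hasDerivAt.congr_deriv ?_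
  refine (hasSum_deriv_ordinaryHypergeometric a b c hx).unique ?_
  refine ((hasSum_ordinaryHypergeometric (a + 1) (b + 1) (c + 1) hx).mul_left
    (a * b / c)).congr_fun fun n ↦ ?_
  rw [succ_mul_ordinaryHypergeometricCoefficient_succ, mul_assoc]

theorem one_sub_mul_deriv_ordinaryHypergeometric (hc : ∀ n : ℕ, c + n ≠ 0) (hx : ‖x‖ < 1) :
    (1 - x) * deriv (₂F₁ a b c) x =
      (a + b - c) * ₂F₁ a b c x + (c - a) * (c - b) / c * ₂F₁ a b (c + 1) x := by
  have hc₀ : c ≠ 0 := by simpa using hc 0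
  rw [sub_mul, one_mul]
  refine ((hasSum_deriv_ordinaryHypergeometric a b c hx).sub
    (hasSum_mul_deriv_ordinaryHypergeometric a b c hx)).unique ?_
  refine (((hasSum_ordinaryHypergeometric a b c hx).mul_left (a + b - c)).add
    ((hasSum_ordinaryHypergeometric a b (c + 1) hx).mul_left
      ((c - a) * (c - b) / c))).congr_fun fun n ↦ ?_
  have h₁ := add_mul_succ_mul_ordinaryHypergeometricCoefficient_succ a b n (hc n)
  have h₂ := add_mul_ordinaryHypergeometricCoefficient_add_one a b n hc₀ (hc n)
  rw [← mul_right_inj' (hc n)]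
  field_simp at h₂ ⊢
  linear_combination c * x ^ n * h₁ - (c - a) * (c - b) * x ^ n * h₂

theorem mul_deriv_ordinaryHypergeometric_add_one (hc : ∀ n : ℕ, c + n ≠ 0) (hx : ‖x‖ < 1) :
    x * deriv (₂F₁ a b (c + 1)) x = c * ₂F₁ a b c x - c * ₂F₁ a b (c + 1) x := by
  refine (hasSum_mul_deriv_ordinaryHypergeometric a b (c + 1) hx).unique ?_
  refine (((hasSum_ordinaryHypergeometric a b c hx).mul_left c).sub
    ((hasSum_ordinaryHypergeometric a b (c + 1) hx).mul_left c)).congr_fun fun n ↦ ?_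
  linear_combination x ^ n *
    add_mul_ordinaryHypergeometricCoefficient_add_one a b n (by simpa using hc 0) (hc n)

end RCLike

section Cooperative

variable {s t : ℝ} {P Q α β : ℝ → ℝ}

theorem monotoneOn_Ico_of_hasDerivAt_nonneg {f f' : ℝ → ℝ} (hf : ContinuousOn f (Ico s t))
    (hf' : ∀ x ∈ Ioo s t, HasDerivAt f (f' x) x) (hf'₀ : ∀ x ∈ Ioo s t, 0 ≤ f' x) :
    MonotoneOn f (Ico s t) := by
  rw [← interior_Ico] at hf' hf'₀
  exact monotoneOn_of_hasDerivWithinAt_nonneg (convex_Ico s t) hf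
    (fun x hx ↦ (hf' x hx).hasDerivWithinAt) hf'₀

theorem pos_of_isPreconnected_of_forall_ne_zero {X M : Type*} [TopologicalSpace X]
    [LinearOrder M] [TopologicalSpace M] [OrderClosedTopology M] [Zero M] {S : Set X} {f : X → M}
    (hS : IsPreconnected S) (hf : ContinuousOn f S) (hne : ∀ x ∈ S, f x ≠ 0) {x y : X}
    (hx : x ∈ S) (hy : y ∈ S) (hfx : 0 < f x) : 0 < f y := by
  by_contra! hfy
  obtain ⟨z, hz, hfz⟩ := hS.intermediate_value hy hx hf ⟨hfy, hfx.le⟩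
  exact hne z hz hfz

theorem le_of_hasDerivAt_mul_of_hasDerivAt_mul
    (hP : ContinuousOn P (Ico s t)) (hQ : ContinuousOn Q (Ico s t))
    (hP' : ∀ x ∈ Ioo s t, HasDerivAt P (α x * Q x) x)
    (hQ' : ∀ x ∈ Ioo s t, HasDerivAt Q (β x * P x) x)
    (hα : ∀ x ∈ Ioo s t, 0 ≤ α x) (hβ : ∀ x ∈ Ioo s t, 0 ≤ β x)
    (hPs : 0 < P s) (hQs : 0 ≤ Q s) {x : ℝ} (hx : x ∈ Ico s t) : P s ≤ P x := by
  have hs : s ∈ Ico s t := left_mem_Ico.2 (hx.1.trans_lt hx.2)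
  have hPQ_mono : MonotoneOn (P * Q) (Ico s t) := by
    refine monotoneOn_Ico_of_hasDerivAt_nonneg (hP.mul hQ)
      (fun y hy ↦ (hP' y hy).mul (hQ' y hy)) fun y hy ↦ ?_
    nlinarith [mul_nonneg (hα y hy) (sq_nonneg (Q y)), mul_nonneg (hβ y hy) (sq_nonneg (P y))]
  have hPQ : ∀ y ∈ Ico s t, 0 ≤ P y * Q y := fun y hy ↦
    (mul_nonneg hPs.le hQs).trans (hPQ_mono hs hy hy.1)
  have hsq_mono : MonotoneOn (P ^ 2) (Ico s t) := by
    refine monotoneOn_Ico_of_hasDerivAt_nonneg (hP.pow 2) (fun y hy ↦ (hP' y hy).pow 2)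
      fun y hy ↦ ?_
    have h := mul_nonneg (hα y hy) (hPQ y (Ioo_subset_Ico_self hy))
    simp only [Nat.cast_ofNat, Nat.add_one_sub_one, pow_one]
    linarith
  have hsq : ∀ y ∈ Ico s t, P s ^ 2 ≤ P y ^ 2 := fun y hy ↦ hsq_mono hs hy hy.1
  have hpos : 0 < P x := by
    refine pos_of_isPreconnected_of_forall_ne_zero isPreconnected_Ico hP (fun y hy hPy ↦ ?_)
      hs hx hPs
    exact (pow_pos hPs 2).not_ge (by simpa [hPy] using hsq y hy)
  exact (sq_le_sq₀ hPs.le hpos.le).1 (hsq x hx)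

end Cooperative

section Real

variable {a b c x : ℝ}

theorem norm_lt_one_of_mem_Ico (hx : x ∈ Ico 0 1) : ‖x‖ < 1 := by
  rw [Real.norm_of_nonneg hx.1]; exact hx.2

theorem continuousOn_ordinaryHypergeometric_Ico (a b c : ℝ) :
    ContinuousOn (₂F₁ a b c : ℝ → ℝ) (Ico 0 1) := fun _ hx ↦
  (differentiableAt_ordinaryHypergeometric a b c
    (norm_lt_one_of_mem_Ico hx)).continuousAt.continuousWithinAt

theorem hasDerivAt_one_sub_rpow_mul_ordinaryHypergeometric (hc : ∀ n : ℕ, c + n ≠ 0)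
    (hx : ‖x‖ < 1) :
    HasDerivAt (fun y ↦ (1 - y) ^ (a + b - c) * ₂F₁ a b c y)
      ((1 - x) ^ (a + b - c - 1) * ((c - a) * (c - b) / c * ₂F₁ a b (c + 1) x)) x := by
  have hx₁ : 0 < 1 - x := by linarith [(abs_lt.1 hx).2]
  refine ((((hasDerivAt_id' x).const_sub 1).rpow_const (p := a + b - c) (.inl hx₁.ne')).mul
    (differentiableAt_ordinaryHypergeometric a b c hx).hasDerivAt).congr_deriv ?_
  have hpow : (1 - x) ^ (a + b - c) = (1 - x) ^ (a + b - c - 1) * (1 - x) := by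
    rw [Real.rpow_sub_one hx₁.ne', div_mul_cancel₀ _ hx₁.ne']
  rw [hpow]
  linear_combination (1 - x) ^ (a + b - c - 1) * one_sub_mul_deriv_ordinaryHypergeometric a b hc hx

theorem hasDerivAt_rpow_mul_ordinaryHypergeometric_add_one (hc : ∀ n : ℕ, c + n ≠ 0)
    (hx₀ : x ≠ 0) (hx : ‖x‖ < 1) :
    HasDerivAt (fun y ↦ y ^ c * ₂F₁ a b (c + 1) y) (c * x ^ (c - 1) * ₂F₁ a b c x) x := by
  refine ((Real.hasDerivAt_rpow_const (p := c) (.inl hx₀)).mul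
    (differentiableAt_ordinaryHypergeometric a b (c + 1) hx).hasDerivAt).congr_deriv ?_
  have hpow : x ^ c = x ^ (c - 1) * x := by rw [Real.rpow_sub_one hx₀, div_mul_cancel₀ _ hx₀]
  rw [hpow]
  linear_combination x ^ (c - 1) * mul_deriv_ordinaryHypergeometric_add_one a b hc hx

theorem one_sub_rpow_le_ordinaryHypergeometric (hc : 0 < c) (hab : 0 ≤ (c - a) * (c - b))
    (hx : x ∈ Ico 0 1) : (1 - x) ^ (c - a - b) ≤ ₂F₁ a b c x := by
  have hcn : ∀ n : ℕ, c + n ≠ 0 := fun n ↦ by positivity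
  have hnorm : ∀ {y : ℝ}, y ∈ Ioo 0 1 → ‖y‖ < 1 := fun hy ↦
    norm_lt_one_of_mem_Ico (Ioo_subset_Ico_self hy)
  have hsub : ∀ {y : ℝ}, y ∈ Ico 0 1 → 0 < 1 - y := fun hy ↦ sub_pos.2 hy.2
  have hP : ContinuousOn (fun y : ℝ ↦ (1 - y) ^ (a + b - c) * ₂F₁ a b c y) (Ico 0 1) :=
    (ContinuousOn.rpow_const (by fun_prop) fun y hy ↦ .inl (hsub hy).ne').mul
      (continuousOn_ordinaryHypergeometric_Ico a b c)
  have hQ : ContinuousOn (fun y : ℝ ↦ y ^ c * ₂F₁ a b (c + 1) y) (Ico 0 1) :=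
    (ContinuousOn.rpow_const (by fun_prop) fun _ _ ↦ .inr hc.le).mul
      (continuousOn_ordinaryHypergeometric_Ico a b (c + 1))
  have hP' : ∀ y ∈ Ioo (0 : ℝ) 1, HasDerivAt (fun y : ℝ ↦ (1 - y) ^ (a + b - c) * ₂F₁ a b c y)
      ((1 - y) ^ (a + b - c - 1) * ((c - a) * (c - b) / c) / y ^ c *
        (y ^ c * ₂F₁ a b (c + 1) y)) y := fun y hy ↦ by
    have hyc : y ^ c ≠ 0 := (Real.rpow_pos_of_pos hy.1 c).ne'
    convert hasDerivAt_one_sub_rpow_mul_ordinaryHypergeometric hcn (hnorm hy) using 1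
    field_simp
  have hQ' : ∀ y ∈ Ioo (0 : ℝ) 1, HasDerivAt (fun y : ℝ ↦ y ^ c * ₂F₁ a b (c + 1) y)
      (c * y ^ (c - 1) / (1 - y) ^ (a + b - c) *
        ((1 - y) ^ (a + b - c) * ₂F₁ a b c y)) y := fun y hy ↦ by
    have hyc : (1 - y) ^ (a + b - c) ≠ 0 := (Real.rpow_pos_of_pos (sub_pos.2 hy.2) _).ne'
    convert hasDerivAt_rpow_mul_ordinaryHypergeometric_add_one hcn hy.1.ne' (hnorm hy) using 1
    field_simp
  have hone : 1 ≤ (1 - x) ^ (a + b - c) * ₂F₁ a b c x := by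
    simpa using le_of_hasDerivAt_mul_of_hasDerivAt_mul hP hQ hP' hQ'
      (fun y hy ↦ by have := hy.1; have := sub_pos.2 hy.2; positivity)
      (fun y hy ↦ by have := hy.1; have := sub_pos.2 hy.2; positivity)
      (by simp) (by simp [Real.zero_rpow hc.ne']) hx
  rw [show c - a - b = -(a + b - c) by ring, Real.rpow_neg (hsub hx).le,
    inv_le_iff_one_le_mul₀' (Real.rpow_pos_of_pos (hsub hx) _)]
  exact hone

theorem ordinaryHypergeometric_nonneg (hc : 0 < c) (hab : 0 ≤ (c - a) * (c - b))
    (hx : x ∈ Ico 0 1) : 0 ≤ ₂F₁ a b c x :=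
  (Real.rpow_nonneg (sub_nonneg.2 hx.2.le) _).trans
    (one_sub_rpow_le_ordinaryHypergeometric hc hab hx)

end Real

theorem poch_eq_ascPochhammer_eval (x : ℝ) (n : ℕ) : poch x n = (ascPochhammer ℝ n).eval x := by
  induction n with
  | zero => simp [poch]
  | succ n ih => rw [ascPochhammer_succ_eval, ← ih, poch, Finset.prod_range_succ, poch]

theorem hyperF_eq_ordinaryHypergeometric (a b c : ℝ) : hyperF a b c = ₂F₁ a b c := by
  ext z
  rw [hyperF, ordinaryHypergeometric_eq_tsum]
  refine tsum_congr fun n ↦ ?_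
  simp only [poch_eq_ascPochhammer_eval, smul_eq_mul]
  field_simp

theorem hyperF_convex_concave_general (a b c : ℝ) (hc : c ∈ Ioi (-2 : ℝ) \ {0, -1})
    (hab : 0 ≤ (c - a) * (c - b)) :
    (0 ≤ a * (a + 1) * b * (b + 1) / (c * (c + 1)) → ConvexOn ℝ (Ico 0 1) (hyperF a b c)) ∧
    (a * (a + 1) * b * (b + 1) / (c * (c + 1)) ≤ 0 → ConcaveOn ℝ (Ico 0 1) (hyperF a b c)) := by
  have hnorm : ∀ x ∈ interior (Ico (0 : ℝ) 1), ‖x‖ < 1 := fun x hx ↦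
    norm_lt_one_of_mem_Ico (interior_subset hx)
  have hF' : ∀ x ∈ interior (Ico (0 : ℝ) 1), HasDerivWithinAt (hyperF a b c)
      (a * b / c * ₂F₁ (a + 1) (b + 1) (c + 1) x) (interior (Ico 0 1)) x := fun x hx ↦ by
    rw [hyperF_eq_ordinaryHypergeometric]
    exact (hasDerivAt_ordinaryHypergeometric a b c (hnorm x hx)).hasDerivWithinAt
  have hF'' : ∀ x ∈ interior (Ico (0 : ℝ) 1),
      HasDerivWithinAt (fun x ↦ a * b / c * ₂F₁ (a + 1) (b + 1) (c + 1) x)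
        (a * (a + 1) * b * (b + 1) / (c * (c + 1)) * ₂F₁ (a + 1 + 1) (b + 1 + 1) (c + 1 + 1) x)
        (interior (Ico 0 1)) x := fun x hx ↦ by
    refine (((hasDerivAt_ordinaryHypergeometric (a + 1) (b + 1) (c + 1)
      (hnorm x hx)).const_mul (a * b / c)).congr_deriv ?_).hasDerivWithinAt
    field_simp
  have hpos : ∀ x ∈ interior (Ico (0 : ℝ) 1), 0 ≤ ₂F₁ (a + 1 + 1) (b + 1 + 1) (c + 1 + 1) x :=
    fun x hx ↦ ordinaryHypergeometric_nonneg (by linarith [mem_Ioi.1 hc.1]) (by simpa using hab)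
      (interior_subset hx)
  have hcont : ContinuousOn (hyperF a b c) (Ico 0 1) :=
    hyperF_eq_ordinaryHypergeometric a b c ▸ continuousOn_ordinaryHypergeometric_Ico a b c
  exact ⟨fun h ↦ convexOn_of_hasDerivWithinAt2_nonneg (convex_Ico 0 1) hcont hF' hF''
      fun x hx ↦ mul_nonneg h (hpos x hx),
    fun h ↦ concaveOn_of_hasDerivWithinAt2_nonpos (convex_Ico 0 1) hcont hF' hF''
      fun x hx ↦ mul_nonpos_of_nonpos_of_nonneg h (hpos x hx)⟩

theorem hyperF_convex_concave (a b c : ℝ) (hc : 0 < c) (hac : a ≤ c) (hbc : b ≤ c) :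
    (0 ≤ a * (a + 1) * b * (b + 1) →
      ConvexOn ℝ (Set.Ico (0 : ℝ) 1) (fun z => hyperF a b c z)) ∧
    (a * (a + 1) * b * (b + 1) ≤ 0 →
      ConcaveOn ℝ (Set.Ico (0 : ℝ) 1) (fun z => hyperF a b c z)) := by
  have key := hyperF_convex_concave_general a b c (by constructor <;> grind)
    (mul_nonneg (sub_nonneg.2 hac) (sub_nonneg.2 hbc))
  exact ⟨fun h ↦ key.1 (by positivity),
    fun h ↦ key.2 (div_nonpos_of_nonpos_of_nonneg h (by positivity))⟩
end

section
/- Let d ≥ 2 and γ > -d + 1 with d + γ > 3. With ψ_γ as defined via the hypergeometric function (ψ_γ(ρ) = F(-γ/2,(2-γ-d)/2;d/2;ρ) for ρ < 1 and ψ_γ(ρ) = ρ^{γ/2}F(-γ/2,(2-γ-d)/2;d/2;ρ^{-1}) for ρ > 1), the function ψ_γ is twice continuously differentiable on [0,∞) and ψ_γ''(1) = (γ/2)(γ/2 - 1) Γ(d/2)Γ(d+γ-3)/(Γ((d+γ-4)/2)Γ((2d+γ-2)/2)). -/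
open Real Set MeasureTheory

/-! Comparing coefficients, `(c - a - b) F(a, b; c; 1) - (c - a)(c - b) / c * F(a, b; c + 1; 1)` is
a telescoping series whose partial sums tend to `0` when `a + b < c`. Iterating `c ↦ c + 1` gives
Gauss's value of `F(a, b; c; 1)`, the Gamma factors appearing through Euler's limit formula.

For `f = F(-γ/2, (2 - γ - d)/2; d/2; ·)` Gauss's formula yields `2 f'(1) = (γ/2) f(1)`, because here
`c = 1 + a - b`. This one relation makes both the first and the second derivative of
`ρ ↦ ρ ^ (γ/2) * f ρ⁻¹` agree with those of `f` at `1`, and `f''(1)` is again evaluated by Gauss.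
-/

open Filter Topology Asymptotics

section Pochhammer

lemma poch_zero (x : ℝ) : poch x 0 = 1 := Finset.prod_range_zero _

lemma poch_succ (x : ℝ) (n : ℕ) : poch x (n + 1) = poch x n * (x + n) :=
  Finset.prod_range_succ _ _

lemma poch_succ' (x : ℝ) (n : ℕ) : poch x (n + 1) = x * poch (x + 1) n := by
  simp only [poch, Finset.prod_range_succ', Nat.cast_add_one, Nat.cast_zero, add_zero, add_assoc,
    add_comm (1 : ℝ), mul_comm x]

lemma poch_pos {x : ℝ} (hx : 0 < x) (n : ℕ) : 0 < poch x n :=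
  Finset.prod_pos fun i _ => by positivity

lemma poch_ne_zero {x : ℝ} (hx : ∀ m : ℕ, x ≠ -m) (n : ℕ) : poch x n ≠ 0 :=
  Finset.prod_ne_zero_iff.2 fun i _ h => hx i (eq_neg_of_add_eq_zero_left h)

lemma poch_le_poch {x y : ℝ} (hx : 0 ≤ x) (hxy : x ≤ y) (n : ℕ) : poch x n ≤ poch y n :=
  Finset.prod_le_prod (fun i _ => by positivity) fun i _ => by gcongr

lemma tendsto_poch_atTop {n : ℕ} (hn : n ≠ 0) : Tendsto (poch · n) atTop atTop := by
  obtain ⟨k, rfl⟩ := Nat.exists_eq_add_one_of_ne_zero hn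
  refine tendsto_atTop_mono' atTop ?_ (tendsto_id.atTop_mul_const (poch_pos one_pos k))
  filter_upwards [eventually_ge_atTop 0] with x hx
  rw [poch_succ']
  exact mul_le_mul_of_nonneg_left (poch_le_poch zero_le_one (by linarith) k) hx

lemma poch_succ_eq_div_GammaSeq (x : ℝ) {n : ℕ} (hn : n ≠ 0) :
    poch x (n + 1) = (n : ℝ) ^ x * n.factorial / GammaSeq x n :=
  (div_div_cancel₀ (by positivity)).symm

lemma Gamma_add_natCast {x : ℝ} (hx : ∀ m : ℕ, x ≠ -m) (n : ℕ) :
    Gamma (x + n) = poch x n * Gamma x := by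
  induction n with
  | zero => simp [poch_zero]
  | succ n ih =>
    rw [Nat.cast_succ, ← add_assoc,
      Real.Gamma_add_one fun h => hx n (eq_neg_of_add_eq_zero_left h), ih, poch_succ]
    ring

lemma inv_Gamma_eq_mul_inv_Gamma_add_one (x : ℝ) : (Gamma x)⁻¹ = x * (Gamma (x + 1))⁻¹ := by
  rcases eq_or_ne x 0 with rfl | hx
  · simp
  · rw [Real.Gamma_add_one hx, mul_inv, mul_inv_cancel_left₀ hx]

/-- Valid at the poles of `Γ` too, where both sides are read with `0⁻¹ = 0`. -/
lemma tendsto_inv_GammaSeq (x : ℝ) :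
    Tendsto (fun n => (GammaSeq x n)⁻¹) atTop (𝓝 (Gamma x)⁻¹) := by
  by_cases hx : Gamma x = 0
  · obtain ⟨m, hm⟩ := (Real.Gamma_eq_zero_iff x).1 hx
    rw [hx, inv_zero]
    refine tendsto_const_nhds.congr' ?_
    filter_upwards [eventually_ge_atTop m] with n hn
    have : ∏ j ∈ Finset.range (n + 1), (x + j) = 0 :=
      Finset.prod_eq_zero (Finset.mem_range.2 (Nat.lt_succ_of_le hn)) (by simp [hm])
    rw [GammaSeq, this, div_zero, inv_zero]
  · exact (GammaSeq_tendsto_Gamma x).inv₀ hx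

end Pochhammer

/-- The `n`-th Taylor coefficient at `0` of the hypergeometric function `hyperF a b c`. -/
noncomputable def hyperCoeff (a b c : ℝ) (n : ℕ) : ℝ :=
  poch a n * poch b n / (poch c n * n.factorial)

section HyperCoeff

variable {a b c : ℝ}

lemma hyperCoeff_zero (a b c : ℝ) : hyperCoeff a b c 0 = 1 := by simp [hyperCoeff, poch_zero]

lemma succ_mul_hyperCoeff_succ (a b c : ℝ) (n : ℕ) :
    (n + 1) * hyperCoeff a b c (n + 1) =
      a * b / c * hyperCoeff (a + 1) (b + 1) (c + 1) n := by
  simp only [hyperCoeff, poch_succ', Nat.factorial_succ, Nat.cast_mul, Nat.cast_add_one]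
  field_simp

lemma mul_hyperCoeff_sub_succ_mul_hyperCoeff_succ (a b : ℝ) (hc : ∀ m : ℕ, c ≠ -m) (n : ℕ) :
    n * hyperCoeff a b c n - (n + 1) * hyperCoeff a b c (n + 1) =
      (c - a - b) * hyperCoeff a b c n - (c - a) * (c - b) / c * hyperCoeff a b (c + 1) n := by
  have hc0 : c ≠ 0 := by simpa using hc 0
  have hcn : c + n ≠ 0 := fun h => hc n (eq_neg_of_add_eq_zero_left h)
  have hpoch : poch c n ≠ 0 := poch_ne_zero hc n
  have hshift : poch (c + 1) n = poch c n * (c + n) / c := by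
    rw [eq_div_iff hc0, mul_comm, ← poch_succ', poch_succ]
  simp only [hyperCoeff, poch_succ, hshift, Nat.factorial_succ, Nat.cast_mul, Nat.cast_add_one]
  field_simp
  ring

lemma isBigO_succ_mul_hyperCoeff_succ (a b c : ℝ) :
    (fun n : ℕ => (n + 1) * hyperCoeff a b c (n + 1)) =O[atTop]
      fun n : ℕ => (n : ℝ) ^ (a + b - c) := by
  have hbdd : (fun n => (GammaSeq a n)⁻¹ * (GammaSeq b n)⁻¹ * GammaSeq c n)
      =O[atTop] fun _ => (1 : ℝ) :=
    (((tendsto_inv_GammaSeq a).mul (tendsto_inv_GammaSeq b)).mul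
      (GammaSeq_tendsto_Gamma c)).isBigO_one ℝ
  have hprod := (isBigO_refl (fun n : ℕ => (n : ℝ) ^ (a + b - c)) atTop).mul hbdd
  simp only [mul_one] at hprod
  refine hprod.congr' ?_ EventuallyEq.rfl
  filter_upwards [eventually_ne_atTop 0] with n hn
  have hn' : (0 : ℝ) < n := by positivity
  simp only [hyperCoeff, poch_succ_eq_div_GammaSeq _ hn, Nat.factorial_succ, Nat.cast_mul,
    Nat.cast_add_one, rpow_sub hn', rpow_add hn']
  field_simp

lemma tendsto_mul_hyperCoeff (hs : 0 < c - a - b) :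
    Tendsto (fun n : ℕ => n * hyperCoeff a b c n) atTop (𝓝 0) := by
  rw [← tendsto_add_atTop_iff_nat 1]
  simp only [Nat.cast_add_one]
  refine (isBigO_succ_mul_hyperCoeff_succ a b c).trans_tendsto ?_
  simpa only [neg_sub, sub_sub, Function.comp_def] using
    (tendsto_rpow_neg_atTop hs).comp tendsto_natCast_atTop_atTop

lemma isBigO_hyperCoeff_succ (a b c : ℝ) :
    (fun n : ℕ => hyperCoeff a b c (n + 1)) =O[atTop]
      fun n : ℕ => (n : ℝ) ^ (a + b - c - 1) := by
  have hinv : (fun n : ℕ => ((n : ℝ) + 1)⁻¹) =O[atTop] fun n : ℕ => (n : ℝ)⁻¹ := by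
    refine IsBigO.of_bound 1 ?_
    filter_upwards [eventually_ne_atTop 0] with n hn
    rw [one_mul, norm_of_nonneg (by positivity), norm_of_nonneg (by positivity)]
    gcongr
    linarith
  refine (hinv.mul (isBigO_succ_mul_hyperCoeff_succ a b c)).congr' ?_ ?_
  · filter_upwards with n
    field_simp
  · filter_upwards [eventually_ne_atTop 0] with n hn
    rw [rpow_sub_one (by positivity), inv_mul_eq_div]

lemma summable_abs_hyperCoeff (hs : 0 < c - a - b) : Summable fun n => |hyperCoeff a b c n| := by
  rw [summable_abs_iff, ← summable_nat_add_iff 1]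
  exact summable_of_isBigO_nat (Real.summable_nat_rpow.2 (by linarith))
    (isBigO_hyperCoeff_succ a b c)

lemma summable_hyperCoeff_mul_pow (a b c : ℝ) {r : ℝ} (hr : |r| < 1) :
    Summable fun n => hyperCoeff a b c n * r ^ n := by
  obtain ⟨k, hk⟩ := exists_nat_ge (a + b - c - 1)
  have hpow : (fun n : ℕ => (n : ℝ) ^ (a + b - c - 1)) =O[atTop] fun n : ℕ => (n : ℝ) ^ k := by
    refine IsBigO.of_bound 1 ?_
    filter_upwards [eventually_ge_atTop 1] with n hn
    rw [one_mul, norm_of_nonneg (by positivity), norm_of_nonneg (by positivity), ← rpow_natCast]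
    exact rpow_le_rpow_of_exponent_le (by exact_mod_cast hn) hk
  rw [← summable_nat_add_iff 1]
  simp only [pow_succ, ← mul_assoc]
  exact (summable_of_isBigO_nat (summable_pow_mul_geometric_of_norm_lt_one k hr)
    (((isBigO_hyperCoeff_succ a b c).trans hpow).mul (isBigO_refl _ _))).mul_right r

end HyperCoeff

section HyperF

variable {a b c : ℝ}

lemma hyperF_eq_tsum (a b c z : ℝ) : hyperF a b c z = ∑' n, hyperCoeff a b c n * z ^ n := rfl

lemma hyperF_one_eq_tsum (a b c : ℝ) : hyperF a b c 1 = ∑' n, hyperCoeff a b c n := by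
  simp only [hyperF_eq_tsum, one_pow, mul_one]

lemma continuousOn_hyperF (hs : 0 < c - a - b) : ContinuousOn (hyperF a b c) (Icc (-1) 1) := by
  refine continuousOn_tsum (fun n => by fun_prop) (summable_abs_hyperCoeff hs) fun n x hx => ?_
  rw [norm_mul, norm_pow]
  exact mul_le_of_le_one_right (norm_nonneg _) (pow_le_one₀ (norm_nonneg _) (abs_le.2 hx))

lemma hasDerivAt_hyperF (a b c : ℝ) {z : ℝ} (hz : |z| < 1) :
    HasDerivAt (hyperF a b c) (a * b / c * hyperF (a + 1) (b + 1) (c + 1) z) z := by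
  obtain ⟨r, hzr, hr⟩ := exists_between hz
  have hr0 : 0 < r := (abs_nonneg z).trans_lt hzr
  have hterm (n : ℕ) (y : ℝ) : hyperCoeff a b c (n + 1) * ((n + 1 : ℕ) * y ^ n) =
      a * b / c * (hyperCoeff (a + 1) (b + 1) (c + 1) n * y ^ n) := by
    rw [← mul_assoc (a * b / c), ← succ_mul_hyperCoeff_succ, Nat.cast_add_one]
    ring
  have hsum {y : ℝ} (hy : |y| < 1) :
      Summable fun n : ℕ => hyperCoeff a b c n * (n * y ^ (n - 1)) := by
    rw [← summable_nat_add_iff 1]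
    simp only [Nat.add_sub_cancel, hterm]
    exact (summable_hyperCoeff_mul_pow _ _ _ hy).mul_left _
  have hderiv := hasDerivAt_tsum_of_isPreconnected (t := Ioo (-r) r) (y₀ := 0)
    (g := fun n y => hyperCoeff a b c n * y ^ n)
    (hsum (by rwa [abs_of_pos hr0])).abs isOpen_Ioo isPreconnected_Ioo
    (fun n y _ => (hasDerivAt_pow n y).const_mul _)
    (fun n y hy => by
      have hyr : |y| ≤ |r| := (abs_lt.2 hy).le.trans (le_abs_self r)
      simp only [norm_eq_abs, abs_mul, abs_pow]
      gcongr)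
    (by simpa using hr0) (summable_hyperCoeff_mul_pow a b c (by simp)) (abs_lt.1 hzr)
  rw [(hsum hz).tsum_eq_zero_add] at hderiv
  simpa only [Nat.add_sub_cancel, hterm, tsum_mul_left, Nat.cast_zero, zero_mul, mul_zero, zero_add,
    ← hyperF_eq_tsum] using hderiv

end HyperF

section Gauss

variable {a b c : ℝ}

/-- The right-hand side of the coefficient identity sums `n ↦ n * hyperCoeff a b c n` by
telescoping, and that sequence vanishes both at `0` and at infinity. -/
lemma hyperF_one_contiguous (hc : ∀ m : ℕ, c ≠ -m) (hs : 0 < c - a - b) :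
    (c - a - b) * hyperF a b c 1 = (c - a) * (c - b) / c * hyperF a b (c + 1) 1 := by
  have htele : HasSum
      (fun n : ℕ => n * hyperCoeff a b c n - (n + 1) * hyperCoeff a b c (n + 1))
      ((c - a - b) * hyperF a b c 1 - (c - a) * (c - b) / c * hyperF a b (c + 1) 1) := by
    simp only [mul_hyperCoeff_sub_succ_mul_hyperCoeff_succ a b hc, hyperF_one_eq_tsum]
    exact ((summable_abs_hyperCoeff hs).of_abs.hasSum.mul_left _).sub
      ((summable_abs_hyperCoeff (by linarith)).of_abs.hasSum.mul_left _)
  have hpartial (N : ℕ) : ∑ n ∈ Finset.range N,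
      (n * hyperCoeff a b c n - (n + 1) * hyperCoeff a b c (n + 1)) =
      -(N * hyperCoeff a b c N) := by
    simpa using Finset.sum_range_sub' (fun n : ℕ => n * hyperCoeff a b c n) N
  have hlim := htele.tendsto_sum_nat
  simp only [hpartial] at hlim
  exact sub_eq_zero.1 (tendsto_nhds_unique hlim (by simpa using (tendsto_mul_hyperCoeff hs).neg))

lemma hyperF_one_eq_mul_hyperF_add_natCast_one (hc : ∀ m : ℕ, c ≠ -m) (hs : 0 < c - a - b)
    (N : ℕ) :
    hyperF a b c 1 = poch (c - a) N * poch (c - b) N / (poch c N * poch (c - a - b) N) *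
      hyperF a b (c + N) 1 := by
  induction N with
  | zero => simp [poch_zero]
  | succ N ih =>
    have hcN (m : ℕ) : c + N ≠ -m := fun h => hc (N + m) (by push_cast; linarith)
    have hsN : 0 < c - a - b + N := by positivity
    have hstep : hyperF a b (c + N) 1 = (c - a + N) * (c - b + N) /
        ((c + N) * (c - a - b + N)) * hyperF a b (c + N + 1) 1 := by
      have h := hyperF_one_contiguous (a := a) (b := b) hcN (by linarith)
      rw [show c + N - a - b = c - a - b + N by ring, show c + N - a = c - a + N by ring,
        show c + N - b = c - b + N by ring] at h
      rw [← mul_right_inj' hsN.ne', h]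
      field_simp
    rw [ih, hstep, Nat.cast_succ, ← add_assoc]
    simp only [poch_succ]
    field_simp

lemma tendsto_hyperCoeff_atTop (a b : ℝ) (n : ℕ) :
    Tendsto (hyperCoeff a b · n) atTop (𝓝 (if n = 0 then 1 else 0)) := by
  split_ifs with hn
  · simpa only [hn, hyperCoeff_zero] using tendsto_const_nhds
  · exact tendsto_const_nhds.div_atTop
      ((tendsto_poch_atTop hn).atTop_mul_const (by positivity))

lemma abs_hyperCoeff_le_of_le (a b : ℝ) {c' : ℝ} (hc : 0 < c) (hcc' : c ≤ c') (n : ℕ) :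
    |hyperCoeff a b c' n| ≤ |hyperCoeff a b c n| := by
  have hpos := poch_pos hc n
  have hle : poch c n ≤ poch c' n := poch_le_poch hc.le hcc' n
  simp only [hyperCoeff, abs_div, abs_mul, abs_of_pos hpos, abs_of_pos (hpos.trans_le hle)]
  gcongr

lemma tendsto_hyperF_one_atTop (a b : ℝ) : Tendsto (hyperF a b · 1) atTop (𝓝 1) := by
  obtain ⟨c₀, hc₀⟩ := exists_gt (max 0 (a + b))
  obtain ⟨hc₀_pos, hc₀_gt⟩ := max_lt_iff.1 hc₀
  have hlim := tendsto_tsum_of_dominated_convergence (summable_abs_hyperCoeff (by linarith))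
    (tendsto_hyperCoeff_atTop a b)
    ((eventually_ge_atTop c₀).mono fun c hc => abs_hyperCoeff_le_of_le a b hc₀_pos hc)
  simpa only [hyperF_one_eq_tsum, tsum_ite_eq] using hlim

lemma tendsto_poch_ratio_Gamma (a b c : ℝ) :
    Tendsto (fun N => poch (c - a) N * poch (c - b) N / (poch c N * poch (c - a - b) N)) atTop
      (𝓝 (Gamma c * Gamma (c - a - b) / (Gamma (c - a) * Gamma (c - b)))) := by
  rw [← tendsto_add_atTop_iff_nat 1, div_eq_mul_inv, mul_inv]
  refine (((GammaSeq_tendsto_Gamma c).mul (GammaSeq_tendsto_Gamma (c - a - b))).mul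
    ((tendsto_inv_GammaSeq (c - a)).mul (tendsto_inv_GammaSeq (c - b)))).congr' ?_
  filter_upwards [eventually_ne_atTop 0] with N hN
  have hN' : (0 : ℝ) < N := by positivity
  simp only [poch_succ_eq_div_GammaSeq _ hN, rpow_sub hN']
  field_simp

theorem hyperF_one_eq_Gamma (hc : ∀ m : ℕ, c ≠ -m) (hs : 0 < c - a - b) :
    hyperF a b c 1 = Gamma c * Gamma (c - a - b) / (Gamma (c - a) * Gamma (c - b)) := by
  have hlim := (tendsto_poch_ratio_Gamma a b c).mul ((tendsto_hyperF_one_atTop a b).comp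
    (tendsto_atTop_add_const_left atTop c tendsto_natCast_atTop_atTop))
  simp only [Function.comp_apply, ← hyperF_one_eq_mul_hyperF_add_natCast_one hc hs, mul_one]
    at hlim
  exact tendsto_nhds_unique tendsto_const_nhds hlim

end Gauss

/-- The `k`-th derivative of `hyperF a b c` on `(-1, 1)`; where the defining series still converges
at the endpoints, this is also its continuous extension to `[-1, 1]`. -/
noncomputable def hyperFDeriv (a b c : ℝ) (k : ℕ) (z : ℝ) : ℝ :=
  poch a k * poch b k / poch c k * hyperF (a + k) (b + k) (c + k) z

section HyperFDeriv

variable {a b c : ℝ} {k : ℕ}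

lemma hyperFDeriv_zero (a b c : ℝ) : hyperFDeriv a b c 0 = hyperF a b c := by
  funext z
  simp [hyperFDeriv, poch_zero]

lemma hasDerivAt_hyperFDeriv (a b c : ℝ) (k : ℕ) {z : ℝ} (hz : |z| < 1) :
    HasDerivAt (hyperFDeriv a b c k) (hyperFDeriv a b c (k + 1) z) z := by
  refine ((hasDerivAt_hyperF (a + k) (b + k) (c + k) hz).const_mul _).congr_deriv ?_
  simp only [hyperFDeriv, poch_succ, Nat.cast_succ, add_assoc]
  field_simp

lemma continuousOn_hyperFDeriv (hs : k < c - a - b) :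
    ContinuousOn (hyperFDeriv a b c k) (Icc (-1) 1) :=
  continuousOn_const.mul (continuousOn_hyperF (by linarith))

lemma hasDerivWithinAt_hyperFDeriv (hs : k + 1 < c - a - b) {z : ℝ} (hz : z ∈ Ioc (-1) 1) :
    HasDerivWithinAt (hyperFDeriv a b c k) (hyperFDeriv a b c (k + 1) z) (Iic 1) z := by
  have hderiv {x : ℝ} (hx : x ∈ Ioo (-1) 1) := hasDerivAt_hyperFDeriv a b c k (abs_lt.2 hx)
  have hcont {j : ℕ} (hj : j < c - a - b) :
      ContinuousWithinAt (hyperFDeriv a b c j) (Ioo (-1) 1) 1 :=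
    (continuousOn_hyperFDeriv hj 1 (by simp)).mono Ioo_subset_Icc_self
  have hmem : Ioo (-1 : ℝ) 1 ∈ 𝓝[<] 1 := Ioo_mem_nhdsLT (by norm_num)
  rcases hz.2.lt_or_eq with hz1 | rfl
  · exact (hderiv ⟨hz.1, hz1⟩).hasDerivWithinAt
  · refine hasDerivWithinAt_Iic_of_tendsto_deriv
      (fun x hx => (hderiv hx).differentiableAt.differentiableWithinAt)
      (hcont (by linarith)) hmem ?_
    have hlim := (hcont (j := k + 1) (by exact_mod_cast hs)).tendsto.mono_left
      (nhdsWithin_le_of_mem hmem)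
    refine hlim.congr' ?_
    filter_upwards [hmem] with x hx using (hderiv hx).deriv.symm

lemma hyperFDeriv_one (hc : ∀ m : ℕ, c ≠ -m) (hs : k < c - a - b) :
    hyperFDeriv a b c k 1 = poch a k * poch b k *
      (Gamma c * Gamma (c - a - b - k) / (Gamma (c - a) * Gamma (c - b))) := by
  have hck (m : ℕ) : c + k ≠ -m := fun h => hc (k + m) (by push_cast; linarith)
  have hpoch := poch_ne_zero hc k
  rw [hyperFDeriv, hyperF_one_eq_Gamma hck (by linarith), Gamma_add_natCast hc,
    add_sub_add_right_eq_sub, add_sub_add_right_eq_sub,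
    show c - a - (b + k) = c - a - b - k by ring]
  field_simp

end HyperFDeriv

section Gluing

lemma hasDerivAt_piecewise_Iic {E : Type*} [NormedAddCommGroup E] [NormedSpace ℝ E]
    {f g f' g' : ℝ → E} {p x : ℝ} (hp : f p = g p) (hp' : f' p = g' p)
    (hf : x ≤ p → HasDerivWithinAt f (f' x) (Iic p) x)
    (hg : p ≤ x → HasDerivWithinAt g (g' x) (Ici p) x) :
    HasDerivAt ((Iic p).piecewise f g) ((Iic p).piecewise f' g' x) x := by
  have eqOn_Ici {u v : ℝ → E} (h : u p = v p) : EqOn ((Iic p).piecewise u v) v (Ici p) := by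
    intro y hy
    rcases (mem_Ici.1 hy).eq_or_lt with rfl | hy
    · simp [h]
    · simp [hy]
  have hleft (hx : x ≤ p) :
      HasDerivWithinAt ((Iic p).piecewise f g) ((Iic p).piecewise f' g' x) (Iic p) x := by
    rw [(Iic p).piecewise_eq_of_mem _ _ hx]
    exact (hf hx).congr_of_mem ((Iic p).piecewise_eqOn f g) hx
  have hright (hx : p ≤ x) :
      HasDerivWithinAt ((Iic p).piecewise f g) ((Iic p).piecewise f' g' x) (Ici p) x := by
    rw [eqOn_Ici hp' hx]
    exact (hg hx).congr_of_mem (eqOn_Ici hp) hx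
  rcases lt_trichotomy x p with hx | rfl | hx
  · exact (hleft hx.le).hasDerivAt (Iic_mem_nhds hx)
  · simpa using (hleft le_rfl).union (hright le_rfl)
  · exact (hright hx.le).hasDerivAt (Ici_mem_nhds hx)

lemma contDiffOn_two_of_hasDerivAt {𝕜 E : Type*} [NontriviallyNormedField 𝕜]
    [NormedAddCommGroup E] [NormedSpace 𝕜 E] {f f' f'' : 𝕜 → E} {s : Set 𝕜} (hs : IsOpen s)
    (hf : ∀ x ∈ s, HasDerivAt f (f' x) x) (hf' : ∀ x ∈ s, HasDerivAt f' (f'' x) x)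
    (hf'' : ContinuousOn f'' s) : ContDiffOn 𝕜 2 f s := by
  have contDiffOn_succ {n : ℕ} {g g' : 𝕜 → E} (hg : ∀ x ∈ s, HasDerivAt g (g' x) x)
      (hg' : ContDiffOn 𝕜 n g' s) : ContDiffOn 𝕜 (n + 1) g s :=
    (contDiffOn_succ_iff_deriv_of_isOpen hs).2
      ⟨fun x hx => (hg x hx).differentiableAt.differentiableWithinAt, by simp,
        hg'.congr fun x hx => (hg x hx).deriv⟩
  exact contDiffOn_succ (n := 1) hf
    (by simpa using contDiffOn_succ (n := 0) hf' (contDiffOn_zero.2 hf''))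

end Gluing

/-- The inversion `ρ ↦ ρ⁻¹` acting on functions of `ρ > 0` with weight `p`. -/
noncomputable def weightedInversion (p : ℝ) (f : ℝ → ℝ) (ρ : ℝ) : ℝ := ρ ^ p * f ρ⁻¹

/-- The derivative of `weightedInversion p f`, in terms of `f` and its derivative `f'`. -/
noncomputable def weightedInversionDeriv (p : ℝ) (f f' : ℝ → ℝ) (ρ : ℝ) : ℝ :=
  p * weightedInversion (p - 1) f ρ - weightedInversion (p - 2) f' ρ

/-- The second derivative of `weightedInversion p f`, in terms of `f` and its first two
derivatives. -/
noncomputable def weightedInversionDeriv₂ (p : ℝ) (f f' f'' : ℝ → ℝ) (ρ : ℝ) : ℝ :=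
  p * weightedInversionDeriv (p - 1) f f' ρ - weightedInversionDeriv (p - 2) f' f'' ρ

/-- The extension of a function given up to `1` to all larger arguments by weighted inversion. -/
noncomputable def inversionExtension (p : ℝ) (f : ℝ → ℝ) : ℝ → ℝ :=
  (Iic 1).piecewise f (weightedInversion p f)

section WeightedInversion

variable {p l : ℝ} {f f' f'' : ℝ → ℝ} {s t : Set ℝ}

lemma weightedInversion_one (p : ℝ) (f : ℝ → ℝ) : weightedInversion p f 1 = f 1 := by
  simp [weightedInversion]

lemma weightedInversionDeriv_one (p : ℝ) (f f' : ℝ → ℝ) :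
    weightedInversionDeriv p f f' 1 = p * f 1 - f' 1 := by
  simp only [weightedInversionDeriv, weightedInversion_one]

lemma continuousOn_weightedInversion (hs : s ⊆ Ioi 0) (hst : MapsTo Inv.inv s t)
    (hf : ContinuousOn f t) : ContinuousOn (weightedInversion p f) s :=
  (continuousOn_id.rpow_const fun _ hx => Or.inl (hs hx).ne').mul
    (hf.comp (continuousOn_inv₀.mono fun _ hx => (hs hx).ne') hst)

lemma hasDerivWithinAt_weightedInversion {x : ℝ} (hx : 0 < x) (hst : MapsTo Inv.inv s t)
    (hf : HasDerivWithinAt f (f' x⁻¹) t x⁻¹) :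
    HasDerivWithinAt (weightedInversion p f) (weightedInversionDeriv p f f' x) s x := by
  have hcomp := hf.scomp x (hasDerivWithinAt_inv hx.ne' s) hst
  have hpow := (hasDerivAt_rpow_const (p := p) (Or.inl hx.ne')).hasDerivWithinAt (s := s)
  refine (hpow.mul hcomp).congr_deriv ?_
  simp only [weightedInversionDeriv, weightedInversion, rpow_sub hx, rpow_two, rpow_one,
    Function.comp_apply, smul_eq_mul]
  ring

lemma mapsTo_inv_Ici_one : MapsTo (Inv.inv : ℝ → ℝ) (Ici 1) (Ioc 0 1) := fun _ hx =>
  ⟨inv_pos.2 (one_pos.trans_le hx), inv_le_one_of_one_le₀ hx⟩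

lemma hasDerivWithinAt_Ici_one_weightedInversion
    (hf : ∀ x ∈ Ioc 0 1, HasDerivWithinAt f (f' x) (Iic 1) x) {x : ℝ} (hx : 1 ≤ x) :
    HasDerivWithinAt (weightedInversion p f) (weightedInversionDeriv p f f' x) (Ici 1) x :=
  hasDerivWithinAt_weightedInversion (one_pos.trans_le hx)
    (mapsTo_inv_Ici_one.mono_right fun _ hy => hy.2) (hf _ (mapsTo_inv_Ici_one hx))

lemma hasDerivAt_inversionExtension (hl : l ≤ 0)
    (hf : ∀ x ∈ Ioc l 1, HasDerivWithinAt f (f' x) (Iic 1) x) (h : 2 * f' 1 = p * f 1)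
    {x : ℝ} (hx : l < x) :
    HasDerivAt (inversionExtension p f)
      ((Iic 1).piecewise f' (weightedInversionDeriv p f f') x) x :=
  hasDerivAt_piecewise_Iic (weightedInversion_one p f).symm
    (by rw [weightedInversionDeriv_one]; linarith) (fun hx1 => hf x ⟨hx, hx1⟩)
    (hasDerivWithinAt_Ici_one_weightedInversion fun y hy => hf y ⟨hl.trans_lt hy.1, hy.2⟩)

lemma weightedInversionDeriv₂_one (h : 2 * f' 1 = p * f 1) :
    weightedInversionDeriv₂ p f f' f'' 1 = f'' 1 := by
  simp only [weightedInversionDeriv₂, weightedInversionDeriv_one]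
  linear_combination (1 - p) * h

lemma hasDerivAt_deriv_inversionExtension (hl : l ≤ 0)
    (hf : ∀ x ∈ Ioc l 1, HasDerivWithinAt f (f' x) (Iic 1) x)
    (hf' : ∀ x ∈ Ioc l 1, HasDerivWithinAt f' (f'' x) (Iic 1) x) (h : 2 * f' 1 = p * f 1)
    {x : ℝ} (hx : l < x) :
    HasDerivAt ((Iic 1).piecewise f' (weightedInversionDeriv p f f'))
      ((Iic 1).piecewise f'' (weightedInversionDeriv₂ p f f' f'') x) x := by
  have hsub : Ioc (0 : ℝ) 1 ⊆ Ioc l 1 := Ioc_subset_Ioc_left hl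
  refine hasDerivAt_piecewise_Iic (by rw [weightedInversionDeriv_one]; linarith)
    (weightedInversionDeriv₂_one h).symm (fun hx1 => hf' x ⟨hx, hx1⟩) fun hx1 => ?_
  exact ((hasDerivWithinAt_Ici_one_weightedInversion (fun y hy => hf y (hsub hy)) hx1).const_mul
    p).sub (hasDerivWithinAt_Ici_one_weightedInversion (fun y hy => hf' y (hsub hy)) hx1)

lemma continuousOn_piecewise_weightedInversionDeriv₂ (hl : l ≤ 0)
    (hf : ContinuousOn f (Ioc l 1)) (hf' : ContinuousOn f' (Ioc l 1))
    (hf'' : ContinuousOn f'' (Ioc l 1)) (h : 2 * f' 1 = p * f 1) :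
    ContinuousOn ((Iic 1).piecewise f'' (weightedInversionDeriv₂ p f f' f'')) (Ioi l) := by
  have hinv {q : ℝ} {g : ℝ → ℝ} (hg : ContinuousOn g (Ioc l 1)) :
      ContinuousOn (weightedInversion q g) (Ici 1) :=
    continuousOn_weightedInversion (Ici_subset_Ioi.2 one_pos)
      (mapsTo_inv_Ici_one.mono_right (Ioc_subset_Ioc_left hl)) hg
  have hinvDeriv {q : ℝ} {g g' : ℝ → ℝ} (hg : ContinuousOn g (Ioc l 1))
      (hg' : ContinuousOn g' (Ioc l 1)) : ContinuousOn (weightedInversionDeriv q g g') (Ici 1) :=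
    (continuousOn_const.mul (hinv hg)).sub (hinv hg')
  refine ContinuousOn.piecewise ?_ ?_ ?_
  · rw [frontier_Iic]
    rintro x ⟨-, rfl⟩
    exact (weightedInversionDeriv₂_one h).symm
  · rwa [closure_Iic, Ioi_inter_Iic]
  · rw [compl_Iic, closure_Ioi]
    exact ((continuousOn_const.mul (hinvDeriv hf hf')).sub (hinvDeriv hf' hf'')).mono
      inter_subset_right

theorem contDiffOn_two_inversionExtension (hl : l ≤ 0)
    (hf : ∀ x ∈ Ioc l 1, HasDerivWithinAt f (f' x) (Iic 1) x)
    (hf' : ∀ x ∈ Ioc l 1, HasDerivWithinAt f' (f'' x) (Iic 1) x)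
    (hf'' : ContinuousOn f'' (Ioc l 1)) (h : 2 * f' 1 = p * f 1) :
    ContDiffOn ℝ 2 (inversionExtension p f) (Ioi l) :=
  contDiffOn_two_of_hasDerivAt isOpen_Ioi
    (fun _ => hasDerivAt_inversionExtension hl hf h)
    (fun _ => hasDerivAt_deriv_inversionExtension hl hf hf' h)
    (continuousOn_piecewise_weightedInversionDeriv₂ hl
      (fun x hx => ((hf x hx).mono Ioc_subset_Iic_self).continuousWithinAt)
      (fun x hx => ((hf' x hx).mono Ioc_subset_Iic_self).continuousWithinAt) hf'' h)

theorem deriv_deriv_inversionExtension_one (hl : l ≤ 0)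
    (hf : ∀ x ∈ Ioc l 1, HasDerivWithinAt f (f' x) (Iic 1) x)
    (hf' : ∀ x ∈ Ioc l 1, HasDerivWithinAt f' (f'' x) (Iic 1) x) (h : 2 * f' 1 = p * f 1) :
    deriv (deriv (inversionExtension p f)) 1 = f'' 1 := by
  have hl1 : l < 1 := hl.trans_lt one_pos
  have hderiv : deriv (inversionExtension p f) =ᶠ[𝓝 1]
      (Iic 1).piecewise f' (weightedInversionDeriv p f f') := by
    filter_upwards [Ioi_mem_nhds hl1] with x hx
    exact (hasDerivAt_inversionExtension hl hf h hx).deriv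
  rw [hderiv.deriv_eq, (hasDerivAt_deriv_inversionExtension hl hf hf' h hl1).deriv]
  simp

end WeightedInversion

section WellPoised

variable {a b : ℝ}

lemma two_mul_hyperFDeriv_one_wellPoised (hc : ∀ m : ℕ, 1 + a - b ≠ -m) (hb : b < 0) :
    2 * hyperFDeriv a b (1 + a - b) 1 1 = -a * hyperF a b (1 + a - b) 1 := by
  have hΓ : Gamma (-2 * b + 1) = -2 * b * Gamma (-2 * b) := Real.Gamma_add_one (by linarith)
  rw [hyperFDeriv_one hc (by push_cast; linarith), hyperF_one_eq_Gamma hc (by linarith),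
    Nat.cast_one, show 1 + a - b - a - b - 1 = -2 * b by ring,
    show 1 + a - b - a - b = -2 * b + 1 by ring, hΓ]
  simp only [poch_succ, poch_zero, Nat.cast_zero, add_zero, one_mul]
  ring

lemma hyperFDeriv_two_one_wellPoised (hc : ∀ m : ℕ, 1 + a - b ≠ -m) (hb : b < -1 / 2) :
    hyperFDeriv a b (1 + a - b) 2 1 = a * (a + 1) *
      (Gamma (1 + a - b) * Gamma (-2 * b - 1) / (Gamma (-b - 1) * Gamma (1 + a - 2 * b))) := by
  have hΓ : (Gamma (-b - 1))⁻¹ = b * (b + 1) * (Gamma (1 - b))⁻¹ := by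
    rw [inv_Gamma_eq_mul_inv_Gamma_add_one, sub_add_cancel, inv_Gamma_eq_mul_inv_Gamma_add_one,
      neg_add_eq_sub]
    ring
  rw [hyperFDeriv_one hc (by push_cast; linarith), Nat.cast_ofNat,
    show 1 + a - b - a - b - 2 = -2 * b - 1 by ring, show 1 + a - b - a = 1 - b by ring,
    show 1 + a - b - b = 1 + a - 2 * b by ring]
  simp only [div_eq_mul_inv, mul_inv, hΓ, poch_succ, poch_zero, Nat.cast_zero, Nat.cast_one,
    add_zero, one_mul]
  ring

theorem contDiffOn_two_inversionExtension_hyperF (hc : ∀ m : ℕ, 1 + a - b ≠ -m)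
    (hb : b < -1 / 2) :
    ContDiffOn ℝ 2 (inversionExtension (-a) (hyperF a b (1 + a - b))) (Ioi (-1)) := by
  have hgauss := two_mul_hyperFDeriv_one_wellPoised hc (by linarith)
  rw [← hyperFDeriv_zero] at hgauss ⊢
  exact contDiffOn_two_inversionExtension (by norm_num)
    (fun _ => hasDerivWithinAt_hyperFDeriv (by push_cast; linarith))
    (fun _ => hasDerivWithinAt_hyperFDeriv (by push_cast; linarith))
    ((continuousOn_hyperFDeriv (by push_cast; linarith)).mono Ioc_subset_Icc_self) hgauss

theorem deriv_deriv_inversionExtension_hyperF_one (hc : ∀ m : ℕ, 1 + a - b ≠ -m)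
    (hb : b < -1 / 2) :
    deriv (deriv (inversionExtension (-a) (hyperF a b (1 + a - b)))) 1 = a * (a + 1) *
      (Gamma (1 + a - b) * Gamma (-2 * b - 1) / (Gamma (-b - 1) * Gamma (1 + a - 2 * b))) := by
  have hgauss := two_mul_hyperFDeriv_one_wellPoised hc (by linarith)
  rw [← hyperFDeriv_two_one_wellPoised hc hb]
  rw [← hyperFDeriv_zero] at hgauss ⊢
  exact deriv_deriv_inversionExtension_one (l := -1) (by norm_num)
    (fun _ => hasDerivWithinAt_hyperFDeriv (by push_cast; linarith))
    (fun _ => hasDerivWithinAt_hyperFDeriv (by push_cast; linarith)) hgauss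

end WellPoised

theorem psi_C2_extension_general (d γ : ℝ) (hd : ∀ m : ℕ, d / 2 ≠ -m) (hγ : 3 < d + γ) :
    ∃ ψ : ℝ → ℝ,
      (∀ ρ ∈ Ico (0 : ℝ) 1, ψ ρ = hyperF (-γ / 2) ((2 - γ - d) / 2) (d / 2) ρ) ∧
      (∀ ρ : ℝ, 1 < ρ →
        ψ ρ = ρ ^ (γ / 2) * hyperF (-γ / 2) ((2 - γ - d) / 2) (d / 2) ρ⁻¹) ∧
      ContDiffOn ℝ 2 ψ (Ici 0) ∧
      deriv (deriv ψ) 1 = γ / 2 * (γ / 2 - 1) *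
        (Gamma (d / 2) * Gamma (d + γ - 3) /
          (Gamma ((d + γ - 4) / 2) * Gamma ((2 * d + γ - 2) / 2))) := by
  set a := -γ / 2 with ha
  set b := (2 - γ - d) / 2 with hb
  have hc : d / 2 = 1 + a - b := by rw [ha, hb]; ring
  have hp : γ / 2 = -a := by rw [ha]; ring
  have hb' : b < -1 / 2 := by rw [hb]; linarith
  rw [hc] at hd ⊢
  rw [hp]
  refine ⟨inversionExtension (-a) (hyperF a b (1 + a - b)),
    fun ρ hρ => (Iic 1).piecewise_eq_of_mem _ _ hρ.2.le,
    fun ρ hρ => (Iic 1).piecewise_eq_of_notMem _ _ (notMem_Iic.2 hρ),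
    (contDiffOn_two_inversionExtension_hyperF hd hb').mono (Ici_subset_Ioi.2 (by norm_num)), ?_⟩
  rw [deriv_deriv_inversionExtension_hyperF_one hd hb',
    show -2 * b - 1 = d + γ - 3 by rw [hb]; ring, show -b - 1 = (d + γ - 4) / 2 by rw [hb]; ring,
    show 1 + a - 2 * b = (2 * d + γ - 2) / 2 by rw [ha, hb]; ring]
  ring

theorem psi_C2_extension (d : ℕ) (hd : 2 ≤ d) (γ : ℝ) (hγ₁ : -(d : ℝ) + 1 < γ)
    (hγ₃ : 3 < (d : ℝ) + γ) :
    ∃ ψ : ℝ → ℝ,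
      (∀ ρ ∈ Set.Ico (0 : ℝ) 1,
        ψ ρ = hyperF (-γ / 2) ((2 - γ - (d : ℝ)) / 2) ((d : ℝ) / 2) ρ) ∧
      (∀ ρ : ℝ, 1 < ρ →
        ψ ρ = ρ ^ (γ / 2) * hyperF (-γ / 2) ((2 - γ - (d : ℝ)) / 2) ((d : ℝ) / 2) ρ⁻¹) ∧
      ContDiffOn ℝ 2 ψ (Set.Ici 0) ∧
      deriv (deriv ψ) 1 = γ / 2 * (γ / 2 - 1) *
        (Real.Gamma ((d : ℝ) / 2) * Real.Gamma ((d : ℝ) + γ - 3) /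
          (Real.Gamma (((d : ℝ) + γ - 4) / 2) * Real.Gamma ((2 * (d : ℝ) + γ - 2) / 2))) :=
  psi_C2_extension_general d γ (fun m => by
    have : (0 : ℝ) < d / 2 := by positivity
    linarith [(m.cast_nonneg : (0 : ℝ) ≤ m)]) hγ₃
end
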